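/- Let K ⊂ ℝⁿ be compact and let q_i > 0 on K for i = 1,…,N. Then the optimal value f̂ of the generalized moment problem equals the optimal value f* of the rational optimization problem, i.e. f̂ = f*. -/

import Mathlib

open MeasureTheory MvPolynomial

/-!
The moment conditions say that the measures `qᵢ dμᵢ` have the same moments as `q₀ dμ₀`. Since these
measures live on the compact set `K`, Stone–Weierstrass (`exists_mvPolynomial_near`) shows that
they integrate every continuous function equally (`integral_mul_eq_of_moments_eq`). Testing against
`pᵢ / qᵢ`, the objective value of a feasible tuple becomes `∫ f q₀ dμ₀`, the average of `f` against
the probability measure `q₀ dμ₀` on `K`, hence at least `min_K f`. Conversely, for a minimiser `x₀`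
of `f` on `K` the Dirac masses `μᵢ = δ_{x₀} / qᵢ(x₀)` are feasible with value `f x₀`. Thus `f x₀` is
the least element of both sets. If `K` is empty both sets are empty, and the two infima
agree as the same default value.
-/

/-- Stone–Weierstrass for polynomials in several variables on a compact set. -/
lemma exists_mvPolynomial_near {n : ℕ} {K : Set (Fin n → ℝ)} (hK : IsCompact K)
    {φ : (Fin n → ℝ) → ℝ} (hφ : ContinuousOn φ K) {ε : ℝ} (hε : 0 < ε) :
    ∃ h : MvPolynomial (Fin n) ℝ, ∀ x ∈ K, |φ x - eval x h| ≤ ε := by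
  have : CompactSpace K := isCompact_iff_compactSpace.mp hK
  let coord : Fin n → C(K, ℝ) := fun t => ⟨fun x => x.1 t, (continuous_apply t).comp continuous_subtype_val⟩
  let F : MvPolynomial (Fin n) ℝ →ₐ[ℝ] C(K, ℝ) := aeval coord
  have hF : ∀ (h : MvPolynomial (Fin n) ℝ) (x : K), F h x = eval x.1 h := by
    intro h x
    induction h using MvPolynomial.induction_on with
    | C a => simp [F]
    | add p q hp hq => simp [hp, hq]
    | mul_X p i hp => simp [hp, F, coord]
  have hsep : F.range.SeparatesPoints := by
    intro x y hxy
    obtain ⟨t, ht⟩ := Function.ne_iff.mp (fun h => hxy (Subtype.ext h))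
    exact ⟨F (X t), ⟨F (X t), ⟨X t, rfl⟩, rfl⟩, by simpa [hF] using ht⟩
  obtain ⟨⟨_, h, rfl⟩, hh⟩ :=
    ContinuousMap.exists_mem_subalgebra_near_continuous_of_separatesPoints F.range hsep
      (fun x : K => φ x) hφ.domRestrict ε hε
  refine ⟨h, fun x hx => ?_⟩
  have := hh ⟨x, hx⟩
  change ‖F h ⟨x, hx⟩ - φ x‖ < ε at this
  rw [hF, Real.norm_eq_abs, abs_sub_comm] at this
  exact this.le

lemma integrable_of_continuousOn_of_compl_null {n : ℕ} {K : Set (Fin n → ℝ)} (hK : IsCompact K)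
    {μ : Measure (Fin n → ℝ)} [IsFiniteMeasure μ] (hμ : μ Kᶜ = 0)
    {φ : (Fin n → ℝ) → ℝ} (hφ : ContinuousOn φ K) : Integrable φ μ := by
  have h : μ.restrict K = μ := Measure.restrict_eq_self_of_ae_mem (mem_ae_iff.mpr hμ)
  have := hφ.integrableOn_compact (μ := μ) hK
  rwa [IntegrableOn, h] at this

lemma abs_integral_mul_sub_le {n : ℕ} {K : Set (Fin n → ℝ)} (hK : IsCompact K)
    {μ : Measure (Fin n → ℝ)} [IsFiniteMeasure μ] (hμ : μ Kᶜ = 0)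
    {a φ ψ : (Fin n → ℝ) → ℝ} (ha : ContinuousOn a K) (ha0 : ∀ x ∈ K, 0 ≤ a x)
    (hφ : ContinuousOn φ K) (hψ : ContinuousOn ψ K) {ε : ℝ}
    (h : ∀ x ∈ K, |φ x - ψ x| ≤ ε) :
    |∫ x, φ x * a x ∂μ - ∫ x, ψ x * a x ∂μ| ≤ ε * ∫ x, a x ∂μ := by
  have hint := fun {φ : (Fin n → ℝ) → ℝ} (h : ContinuousOn φ K) =>
    integrable_of_continuousOn_of_compl_null hK hμ h
  have hφa : Integrable (fun x => φ x * a x) μ := hint (hφ.mul ha)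
  have hψa : Integrable (fun x => ψ x * a x) μ := hint (hψ.mul ha)
  rw [← integral_sub hφa hψa, ← integral_const_mul]
  rw [← Real.norm_eq_abs]
  refine norm_integral_le_of_norm_le ((hint ha).const_mul ε) ?_
  have hae : ∀ᵐ x ∂μ, x ∈ K := mem_ae_iff.mpr hμ
  filter_upwards [hae] with x hx
  rw [← sub_mul, norm_mul, Real.norm_eq_abs, Real.norm_eq_abs, abs_of_nonneg (ha0 x hx)]
  exact mul_le_mul_of_nonneg_right (h x hx) (ha0 x hx)

/-- Moments determine measures with compact support: if the densities `a dμ` and `b dν` have equal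
moments, they integrate every function continuous on `K` to the same value. -/
lemma integral_mul_eq_of_moments_eq {n : ℕ} {K : Set (Fin n → ℝ)} (hK : IsCompact K)
    {μ ν : Measure (Fin n → ℝ)} [IsFiniteMeasure μ] [IsFiniteMeasure ν]
    (hμ : μ Kᶜ = 0) (hν : ν Kᶜ = 0)
    {a b : (Fin n → ℝ) → ℝ} (ha : ContinuousOn a K) (hb : ContinuousOn b K)
    (ha0 : ∀ x ∈ K, 0 ≤ a x) (hb0 : ∀ x ∈ K, 0 ≤ b x)
    (hmom : ∀ α : Fin n →₀ ℕ,
      ∫ x, (∏ t, x t ^ α t) * a x ∂μ = ∫ x, (∏ t, x t ^ α t) * b x ∂ν)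
    {φ : (Fin n → ℝ) → ℝ} (hφ : ContinuousOn φ K) :
    ∫ x, φ x * a x ∂μ = ∫ x, φ x * b x ∂ν := by
  have hpoly : ∀ h : MvPolynomial (Fin n) ℝ,
      ∫ x, eval x h * a x ∂μ = ∫ x, eval x h * b x ∂ν := by
    intro h
    have hmono : ∀ α : Fin n →₀ ℕ, Continuous fun x : Fin n → ℝ => ∏ t, x t ^ α t := by
      intro α; fun_prop
    simp only [eval_eq', Finset.sum_mul, mul_assoc]
    rw [integral_finsetSum, integral_finsetSum]
    · simp only [integral_const_mul, hmom]
    · intro α _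
      exact (integrable_of_continuousOn_of_compl_null hK hν
        ((hmono α).continuousOn.mul hb)).const_mul _
    · intro α _
      exact (integrable_of_continuousOn_of_compl_null hK hμ
        ((hmono α).continuousOn.mul ha)).const_mul _
  have hmass : ∫ x, b x ∂ν = ∫ x, a x ∂μ := by simpa using (hmom 0).symm
  have hae : ∀ᵐ x ∂μ, x ∈ K := mem_ae_iff.mpr hμ
  have hC : 0 ≤ ∫ x, a x ∂μ := integral_nonneg_of_ae (hae.mono ha0)
  set C := ∫ x, a x ∂μ with hCdef
  refine eq_of_forall_dist_le fun δ hδ => ?_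
  have hε : 0 < δ / (2 * (C + 1)) := by positivity
  obtain ⟨h, hh⟩ := exists_mvPolynomial_near hK hφ hε
  have hcont : ContinuousOn (fun x => eval x h) K := (MvPolynomial.continuous_eval h).continuousOn
  have h1 := abs_integral_mul_sub_le hK hμ ha ha0 hφ hcont hh
  have h2 := abs_integral_mul_sub_le hK hν hb hb0 hφ hcont hh
  rw [hmass] at h2
  rw [hpoly h] at h1
  have h3 : δ / (2 * (C + 1)) * C ≤ δ / 2 := by
    rw [div_mul_eq_mul_div, div_le_div_iff₀ (by positivity) (by positivity)]
    nlinarith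
  rw [← hCdef] at h1
  rw [Real.dist_eq]
  rw [abs_le] at h1 h2 ⊢
  constructor <;> linarith [h1.1, h1.2, h2.1, h2.2]

/-- **Theorem 1 (dense GMP formulation).**
Let `K ⊆ ℝⁿ` be the compact basic semialgebraic set defined by `g₁,…,g_m`, and let
`p_i, q_i` be polynomials with `q_i > 0` on `K` for `i = 1,…,N`.  Then the optimal value
`f̂` of the generalized moment problem equals the optimal value `f* = inf_{x ∈ K} Σᵢ pᵢ/qᵢ`
of the rational optimization problem. -/
theorem dense_gmp_value_eq_rational_value
    (n N m : ℕ) (hN : 0 < N)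
    (g : Fin m → MvPolynomial (Fin n) ℝ)
    (K : Set (Fin n → ℝ))
    (hK : K = {x | ∀ j, 0 ≤ eval x (g j)})
    (hKcpt : IsCompact K)
    (p q : Fin N → MvPolynomial (Fin n) ℝ)
    (hqpos : ∀ i, ∀ x ∈ K, 0 < eval x (q i))
    (f : (Fin n → ℝ) → ℝ)
    (hf : f = fun x => ∑ i, eval x (p i) / eval x (q i))
    (fstar : ℝ)
    (hfstar : fstar = sInf (f '' K))
    (fhat : ℝ)
    (hfhat : fhat = sInf {v : ℝ |
      ∃ μ : Fin N → Measure (Fin n → ℝ),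
        (∀ i, IsFiniteMeasure (μ i)) ∧
        (∀ i, μ i Kᶜ = 0) ∧
        (∫ x, eval x (q ⟨0, hN⟩) ∂(μ ⟨0, hN⟩)) = 1 ∧
        (∀ i, ∀ α : Fin n →₀ ℕ,
          ∫ x, (∏ t, x t ^ α t) * eval x (q i) ∂(μ i)
            = ∫ x, (∏ t, x t ^ α t) * eval x (q ⟨0, hN⟩) ∂(μ ⟨0, hN⟩)) ∧
        v = ∑ i, ∫ x, eval x (p i) ∂(μ i)}) :
    fhat = fstar := by
  subst hfstar hfhat
  have hqc : ∀ i, ContinuousOn (fun x => eval x (q i)) K :=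
    fun i => (MvPolynomial.continuous_eval (q i)).continuousOn
  have hpc : ∀ i, ContinuousOn (fun x => eval x (p i)) K :=
    fun i => (MvPolynomial.continuous_eval (p i)).continuousOn
  have hdc : ∀ i, ContinuousOn (fun x => eval x (p i) / eval x (q i)) K :=
    fun i => (hpc i).div (hqc i) fun x hx => (hqpos i x hx).ne'
  have hfc : ContinuousOn f K := by
    rw [hf]
    exact continuousOn_finsetSum _ fun i _ => hdc i
  rcases K.eq_empty_or_nonempty with hKe | hKne
  -- On empty `K` every measure is zero, contradicting the normalisation.
  · congr 1
    rw [hKe, Set.image_empty, Set.eq_empty_iff_forall_notMem]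
    rintro v ⟨μ, -, h0, h1, -⟩
    have hz : μ ⟨0, hN⟩ = 0 := by simpa using h0 ⟨0, hN⟩
    simp [hz] at h1
  obtain ⟨x₀, hx₀, hmin⟩ := hKcpt.exists_isMinOn hKne hfc
  have hleast : IsLeast (f '' K) (f x₀) :=
    ⟨⟨x₀, hx₀, rfl⟩, by rintro _ ⟨x, hx, rfl⟩; exact hmin hx⟩
  rw [hleast.csInf_eq]
  refine IsLeast.csInf_eq ⟨?_, ?_⟩
  · have hint : ∀ i (φ : (Fin n → ℝ) → ℝ),
        ∫ x, φ x ∂(ENNReal.ofReal (eval x₀ (q i))⁻¹ • Measure.dirac x₀)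
          = (eval x₀ (q i))⁻¹ * φ x₀ := by
      intro i φ
      rw [integral_smul_measure, integral_dirac,
        ENNReal.toReal_ofReal (inv_nonneg.mpr (hqpos i x₀ hx₀).le), smul_eq_mul]
    refine ⟨fun i => ENNReal.ofReal (eval x₀ (q i))⁻¹ • Measure.dirac x₀, ?_, ?_, ?_, ?_, ?_⟩
    · intro i
      exact Measure.smul_finite _ ENNReal.ofReal_ne_top
    · intro i
      simp [Measure.dirac_apply' _ hKcpt.measurableSet.compl, hx₀]
    · rw [hint, inv_mul_cancel₀ (hqpos _ x₀ hx₀).ne']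
    · intro i α
      rw [hint, hint]
      have h1 := (hqpos i x₀ hx₀).ne'
      have h2 := (hqpos ⟨0, hN⟩ x₀ hx₀).ne'
      field_simp
    · simp only [hint, hf]
      exact Finset.sum_congr rfl fun i _ => by rw [div_eq_inv_mul]
  · rintro v ⟨μ, hfin, hnull, hone, hmom, rfl⟩
    have hae : ∀ i, ∀ᵐ x ∂μ i, x ∈ K := fun i => mem_ae_iff.mpr (hnull i)
    have hint := fun {φ : (Fin n → ℝ) → ℝ} (h : ContinuousOn φ K) =>
      integrable_of_continuousOn_of_compl_null hKcpt (hnull ⟨0, hN⟩) h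
    have key : ∀ i, ∫ x, eval x (p i) ∂μ i
        = ∫ x, eval x (p i) / eval x (q i) * eval x (q ⟨0, hN⟩) ∂μ ⟨0, hN⟩ := by
      intro i
      rw [← integral_mul_eq_of_moments_eq hKcpt (hnull i) (hnull ⟨0, hN⟩) (hqc i) (hqc _)
        (fun x hx => (hqpos i x hx).le) (fun x hx => (hqpos _ x hx).le) (hmom i) (hdc i)]
      refine integral_congr_ae ?_
      filter_upwards [hae i] with x hx
      rw [div_mul_cancel₀ _ (hqpos i x hx).ne']
    have hsum : ∑ i, ∫ x, eval x (p i) ∂μ i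
        = ∫ x, f x * eval x (q ⟨0, hN⟩) ∂μ ⟨0, hN⟩ := by
      simp only [key, hf, Finset.sum_mul]
      rw [integral_finsetSum]
      exact fun i _ => hint ((hdc i).mul (hqc _))
    calc f x₀ = ∫ x, f x₀ * eval x (q ⟨0, hN⟩) ∂μ ⟨0, hN⟩ := by
          rw [integral_const_mul, hone, mul_one]
      _ ≤ ∫ x, f x * eval x (q ⟨0, hN⟩) ∂μ ⟨0, hN⟩ := by
          refine integral_mono_ae ((hint (hqc _)).const_mul _) (hint (hfc.mul (hqc _))) ?_
          filter_upwards [hae ⟨0, hN⟩] with x hx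
          exact mul_le_mul_of_nonneg_right (hmin hx) (hqpos _ x hx).le
      _ = _ := hsum.symm
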